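/- Let X be a partial allocation and g an unallocated good with v_j(g) > 0. Suppose agent i champions agent j and agent j does not champion himself (j is not a most envious agent for X_j ∪ {g}), and let G_{ij} be a maximum-cardinality subset G of X_j ∪ {g} with v_i((X_j ∪ {g}) ∖ G) > v_i(X_i). Then G_{ij} ≠ ∅ and v_j(G_{ij}) ≥ v_j(g). -/

import Mathlib

/-!
Write `S = X_j ∪ {g}`. Removing from `S` a largest set `G_ij` that leaves `i` envious leaves exactly
`κ_X(i, S)` goods. As `v_j(g) > 0`, agent `j` envies `S`, so if `i` is most envious for `S` and `j`
is not, then `κ_X(i, S) < κ_X(j, S)`, and `j` does not envy `S \ G_ij`. By additivity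
`v_j(G_ij) = v_j(X_j) + v_j(g) - v_j(S \ G_ij) ≥ v_j(g)`.
-/

open Finset

/-- Additive value of a bundle `S` under per-good valuation `v`. -/
noncomputable def val {G : Type*} (v : G → ℝ) (S : Finset G) : ℝ := ∑ g ∈ S, v g

/-- `X` is EFX: no agent `i` strongly envies agent `j`, i.e. for every good `g`
in `X j`, `v_i(X_i) ≥ v_i(X_j \ {g})`. -/
def EFX {G : Type*} [DecidableEq G] (v : Fin 3 → G → ℝ) (X : Fin 3 → Finset G) : Prop :=
  ∀ i j : Fin 3, ∀ g ∈ X j, val (v i) (X j \ {g}) ≤ val (v i) (X i)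

/-- `κ_X(i,S)`: the minimum cardinality of a subset `S' ⊆ S` with `v_i(S') > v_i(X_i)`. -/
noncomputable def kappa {G : Type*} (v : G → ℝ) (Xi S : Finset G) : ℕ :=
  sInf {n : ℕ | ∃ S' ⊆ S, S'.card = n ∧ val v Xi < val v S'}

/-- Agent `i` is a most envious agent for the bundle `S` under allocation `X`. -/
def MostEnvious {G : Type*} (v : Fin 3 → G → ℝ) (X : Fin 3 → Finset G)
    (i : Fin 3) (S : Finset G) : Prop :=
  val (v i) (X i) < val (v i) S ∧
    ∀ k : Fin 3, val (v k) (X k) < val (v k) S →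
      kappa (v i) (X i) S ≤ kappa (v k) (X k) S

section Kappa

variable {G : Type*} {v : G → ℝ} {A S T : Finset G}

lemma kappa_le_card (hTS : T ⊆ S) (hT : val v A < val v T) : kappa v A S ≤ T.card :=
  Nat.sInf_le ⟨T, hTS, rfl, hT⟩

lemma val_le_of_card_lt_kappa (hTS : T ⊆ S) (hcard : T.card < kappa v A S) :
    val v T ≤ val v A :=
  le_of_not_gt fun hT ↦ hcard.not_ge (kappa_le_card hTS hT)

lemma exists_subset_card_eq_kappa (hTS : T ⊆ S) (hT : val v A < val v T) :
    ∃ U ⊆ S, U.card = kappa v A S ∧ val v A < val v U :=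
  Nat.sInf_mem (s := {n | ∃ U ⊆ S, U.card = n ∧ val v A < val v U}) ⟨T.card, T, hTS, rfl, hT⟩

end Kappa

/-- `H` is a lower half of the bundle `S` for an agent with valuation `v` who owns `A`: a subset of
`S` of maximum cardinality among those whose removal leaves a bundle that the agent prefers to `A`.
For `A = X_i` and `S = X_j ∪ {g}` this says that `H` is a possible choice of `G_ij`. -/
structure IsLowerHalf {G : Type*} [DecidableEq G] (v : G → ℝ) (A S H : Finset G) : Prop where
  subset : H ⊆ S
  lt_val_sdiff : val v A < val v (S \ H)
  card_le : ∀ K ⊆ S, val v A < val v (S \ K) → K.card ≤ H.card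

namespace IsLowerHalf

variable {G : Type*} [DecidableEq G] {v w : G → ℝ} {A B S H : Finset G}

lemma card_sdiff_eq_kappa (hH : IsLowerHalf v A S H) : (S \ H).card = kappa v A S := by
  refine le_antisymm ?_ (kappa_le_card sdiff_subset hH.lt_val_sdiff)
  obtain ⟨T, hTS, hTcard, hT⟩ := exists_subset_card_eq_kappa sdiff_subset hH.lt_val_sdiff
  have hle : (S \ T).card ≤ H.card :=
    hH.card_le (S \ T) sdiff_subset (by rwa [Finset.sdiff_sdiff_eq_self hTS])
  have hsplitT : (S \ T).card + T.card = S.card := card_sdiff_add_card_eq_card hTS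
  have hsplitH : (S \ H).card + H.card = S.card := card_sdiff_add_card_eq_card hH.subset
  omega

lemma val_sdiff_le_of_kappa_lt (hH : IsLowerHalf v A S H) (hlt : kappa v A S < kappa w B S) :
    val w (S \ H) ≤ val w B :=
  val_le_of_card_lt_kappa sdiff_subset (hH.card_sdiff_eq_kappa.trans_lt hlt)

end IsLowerHalf

lemma MostEnvious.kappa_lt_of_not_mostEnvious {G : Type*} {v : Fin 3 → G → ℝ}
    {X : Fin 3 → Finset G} {i j : Fin 3} {S : Finset G} (hi : MostEnvious v X i S)
    (hj : ¬ MostEnvious v X j S) (henvy : val (v j) (X j) < val (v j) S) :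
    kappa (v i) (X i) S < kappa (v j) (X j) S :=
  lt_of_not_ge fun hle ↦ hj ⟨henvy, fun k hk ↦ hle.trans (hi.2 k hk)⟩

lemma val_union_singleton {G : Type*} [DecidableEq G] (v : G → ℝ) {A : Finset G} {g : G}
    (hg : g ∉ A) : val v (A ∪ {g}) = val v A + v g := by
  simp only [_root_.val, sum_union (disjoint_singleton_right.2 hg), sum_singleton]

theorem lower_half_valuable_for_championed_general {G : Type*} [DecidableEq G]
    {v : Fin 3 → G → ℝ} {X : Fin 3 → Finset G} {g : G} {i j : Fin 3} {H : Finset G}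
    (hg : g ∉ X j) (hpos : 0 < v j g) (hch : MostEnvious v X i (X j ∪ {g}))
    (hnoself : ¬ MostEnvious v X j (X j ∪ {g}))
    (hH : IsLowerHalf (v i) (X i) (X j ∪ {g}) H) :
    H ≠ ∅ ∧ v j g ≤ val (v j) H := by
  have hadd : val (v j) (X j ∪ {g}) = val (v j) (X j) + v j g := val_union_singleton (v j) hg
  have hkappa : kappa (v i) (X i) (X j ∪ {g}) < kappa (v j) (X j) (X j ∪ {g}) :=
    hch.kappa_lt_of_not_mostEnvious hnoself (by linarith)
  have hupper : val (v j) ((X j ∪ {g}) \ H) ≤ val (v j) (X j) :=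
    hH.val_sdiff_le_of_kappa_lt hkappa
  have hsplit : val (v j) ((X j ∪ {g}) \ H) + val (v j) H = val (v j) (X j ∪ {g}) :=
    sum_sdiff hH.subset
  have hvaluable : v j g ≤ val (v j) H := by linarith
  refine ⟨?_, hvaluable⟩
  rintro rfl
  exact hpos.not_ge (by simpa only [_root_.val, sum_empty] using hvaluable)

/-- Observation 7: if `i` champions `j`, `j` does not self-champion and `v_j(g) > 0`,
then the lower-half bundle `G_ij` is nonempty and `v_j(G_ij) ≥ v_j(g)`. -/
theorem lower_half_valuable_for_championed {G : Type*} [DecidableEq G] (M : Finset G)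
    (v : Fin 3 → G → ℝ) (hv : ∀ i : Fin 3, ∀ g ∈ M, 0 ≤ v i g)
    (X : Fin 3 → Finset G) (hXM : ∀ i, X i ⊆ M)
    (hdisj : ∀ i j, i ≠ j → Disjoint (X i) (X j))
    (g : G) (hg : g ∈ M) (hun : g ∉ X 0 ∪ X 1 ∪ X 2)
    (i j : Fin 3) (hch : MostEnvious v X i (X j ∪ {g}))
    (hpos : 0 < v j g)
    (hnoself : ¬ MostEnvious v X j (X j ∪ {g}))
    (Gij : Finset G) (hGsub : Gij ⊆ X j ∪ {g})
    (hGval : val (v i) (X i) < val (v i) ((X j ∪ {g}) \ Gij))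
    (hGmax : ∀ G' ⊆ X j ∪ {g},
      val (v i) (X i) < val (v i) ((X j ∪ {g}) \ G') → G'.card ≤ Gij.card) :
    Gij ≠ ∅ ∧ v j g ≤ val (v j) Gij := by
  have hgj : g ∉ X j := by
    simp only [mem_union, not_or] at hun
    fin_cases j
    exacts [hun.1.1, hun.1.2, hun.2]
  exact lower_half_valuable_for_championed_general hgj hpos hch hnoself ⟨hGsub, hGval, hGmax⟩
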